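/- (Proposition B.3, part 2.) Assume p ≠ q. Let 0 < δ < 1 satisfy √(log(1/δ)/(2 c_a n)) ≤ 0.1 ν. Then there exists a measurable set E of training configurations D_tr with P_(1)(E) ≥ 1 − 4δ such that for every D_tr ∈ E and every 0 < λ < 3 √(1.1 ν c_a n), the conditional probability P_(2)[ T̂_a < Ĉ − 4 λ √(1.1 ν/(c_a n)) ] ≤ 4 e^{−λ²/4}. -/

import Mathlib

open MeasureTheory Real
open scoped BigOperators ENNReal

/-- The asymmetric empirical MMD statistic `T̂_a` of kernel `K`, computed between the
training sample `dtr = (X₍₁₎, Y₍₁₎)` and the test sample `dte = (X₍₂₎, Y₍₂₎)`. -/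
noncomputable def asymMMD {𝒳 : Type*} (K : 𝒳 → 𝒳 → ℝ) (n1X n1Y n2X n2Y : ℕ)
    (dtr : (Fin n1X → 𝒳) × (Fin n1Y → 𝒳))
    (dte : (Fin n2X → 𝒳) × (Fin n2Y → 𝒳)) : ℝ :=
  (1/((n2X:ℝ)*(n1X:ℝ))) * ∑ i, ∑ j, K (dte.1 i) (dtr.1 j)
  - (1/((n2X:ℝ)*(n1Y:ℝ))) * ∑ i, ∑ j, K (dte.1 i) (dtr.2 j)
  - (1/((n2Y:ℝ)*(n1X:ℝ))) * ∑ i, ∑ j, K (dte.2 i) (dtr.1 j)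
  + (1/((n2Y:ℝ)*(n1Y:ℝ))) * ∑ i, ∑ j, K (dte.2 i) (dtr.2 j)

/-- The exact NTK witness function `ĝ_NTK` built from the training sample
`dtr = (X₍₁₎, Y₍₁₎)`. -/
noncomputable def ntkWitness {𝒳 : Type*} (K : 𝒳 → 𝒳 → ℝ) (n1X n1Y : ℕ)
    (dtr : (Fin n1X → 𝒳) × (Fin n1Y → 𝒳)) (x : 𝒳) : ℝ :=
  (1/(n1X:ℝ)) * ∑ j, K x (dtr.1 j) - (1/(n1Y:ℝ)) * ∑ j, K x (dtr.2 j)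

/-- The conditional mean `Ĉ = ∫ ĝ_NTK d(p−q) = ∫ ĝ_NTK dp − ∫ ĝ_NTK dq`. -/
noncomputable def condMeanC {𝒳 : Type*} [MeasurableSpace 𝒳] (K : 𝒳 → 𝒳 → ℝ)
    (n1X n1Y : ℕ) (p q : Measure 𝒳)
    (dtr : (Fin n1X → 𝒳) × (Fin n1Y → 𝒳)) : ℝ :=
  (∫ x, ntkWitness K n1X n1Y dtr x ∂p) - ∫ x, ntkWitness K n1X n1Y dtr x ∂q

/-!
Given the training data, `-T̂_a` is a sum of independent terms indexed by the pooled test sample.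
Bernstein's inequality for this sum, a consequence of `exp x ≤ 1 + x + x ^ 2`, gives the Gaussian
tail as soon as the witness function has second moment at most `4 * V` under both `p` and `q`. By
Cauchy–Schwarz, its second moment under `r` is at most twice the sum of the two training averages
of the bounded function `z ↦ ∫ K(x, z)² dr(x)`, whose means are at most `ν`. Hoeffding's inequality
for the pooled training sample shows that this sum of averages exceeds `2 * V` with probability at
most `δ ^ 2`, for each of `r = p` and `r = q`.
-/

open ProbabilityTheory Set

section Concentration

lemma exp_le_one_add_add_sq {x : ℝ} (hx : x ≤ 3 / 2) : exp x ≤ 1 + x + x ^ 2 := by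
  rcases le_total x (-1) with hx₀ | hx₀
  · nlinarith [exp_le_one_iff.2 (hx₀.trans (by norm_num : (-1 : ℝ) ≤ 0))]
  rcases le_total x 1 with hx₁ | hx₁
  · linarith [(abs_le.1 (abs_exp_sub_one_sub_id_le (abs_le.2 ⟨hx₀, hx₁⟩))).2]
  obtain ⟨u, rfl⟩ : ∃ u, x = 1 + u := ⟨x - 1, by ring⟩
  have hu₀ : 0 ≤ u := by linarith
  have hu : u ≤ 1 / 2 := by linarith
  have htaylor : exp u ≤ 1 + u + u ^ 2 / 2 + 2 / 9 * u ^ 3 := by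
    convert exp_bound' hu₀ (hu.trans (by norm_num)) (n := 3) (by norm_num) using 1
    simp [Finset.sum_range_succ, Nat.factorial]
    ring
  calc exp (1 + u) ≤ 2.7183 * (1 + u + u ^ 2 / 2 + 2 / 9 * u ^ 3) := by
        rw [exp_add]
        gcongr
        linarith [exp_one_lt_d9]
    _ ≤ 1 + (1 + u) + (1 + u) ^ 2 := by
        nlinarith [mul_nonneg hu₀ (sub_nonneg.2 hu),
          mul_nonneg (mul_nonneg hu₀ hu₀) (sub_nonneg.2 hu)]

variable {Ω ι : Type*} [MeasurableSpace Ω] {μ : Measure Ω}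

lemma mgf_le_exp_of_mul_le [IsProbabilityMeasure μ] {X : Ω → ℝ} {s : ℝ} (hX : MemLp X 2 μ)
    (hs : ∀ᵐ ω ∂μ, s * X ω ≤ 3 / 2) :
    mgf X μ s ≤ exp (s * ∫ ω, X ω ∂μ + s ^ 2 * ∫ ω, X ω ^ 2 ∂μ) := by
  have hX₁ : Integrable (fun ω ↦ 1 + s * X ω) μ :=
    (integrable_const 1).add ((hX.integrable one_le_two).const_mul s)
  have hX₂ : Integrable (fun ω ↦ s ^ 2 * X ω ^ 2) μ := hX.integrable_sq.const_mul _
  calc mgf X μ s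
      ≤ ∫ ω, (1 + s * X ω + s ^ 2 * X ω ^ 2) ∂μ := by
        refine integral_mono_of_nonneg (.of_forall fun ω ↦ (exp_pos _).le) (hX₁.add hX₂) ?_
        filter_upwards [hs] with ω hω
        simpa only [mul_pow] using exp_le_one_add_add_sq hω
    _ = s * ∫ ω, X ω ∂μ + s ^ 2 * ∫ ω, X ω ^ 2 ∂μ + 1 := by
        rw [integral_add hX₁ hX₂, integral_add (integrable_const 1)
          ((hX.integrable one_le_two).const_mul s), integral_const_mul, integral_const_mul,
          integral_const, probReal_univ, one_smul]
        ring
    _ ≤ exp (s * ∫ ω, X ω ∂μ + s ^ 2 * ∫ ω, X ω ^ 2 ∂μ) := add_one_le_exp _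

variable [Fintype ι] {X : ι → Ω → ℝ} {ε : ℝ}

lemma mgf_sum_le_exp_of_iIndepFun (hindep : iIndepFun X μ) (hmeas : ∀ i, Measurable (X i))
    (hX : ∀ i, MemLp (X i) 2 μ) {s : ℝ} (hs : ∀ i, ∀ᵐ ω ∂μ, s * X i ω ≤ 3 / 2) :
    mgf (∑ i, X i) μ s ≤ exp (s * ∑ i, ∫ ω, X i ω ∂μ + s ^ 2 * ∑ i, ∫ ω, X i ω ^ 2 ∂μ) := by
  have : IsProbabilityMeasure μ := hindep.isProbabilityMeasure
  rw [hindep.mgf_sum hmeas, Finset.mul_sum, Finset.mul_sum, ← Finset.sum_add_distrib, exp_sum]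
  exact Finset.prod_le_prod (fun _ _ ↦ mgf_nonneg) fun i _ ↦ mgf_le_exp_of_mul_le (hX i) (hs i)

/- The Chernoff bound at `s = ε / (2 * v)`, the minimiser of `-s * ε + s ^ 2 * v`; the hypothesis
`hXε` says that `s * X i ≤ 3 / 2`. -/
lemma measureReal_sum_ge_le_exp_of_sum_integral_sq_le (hindep : iIndepFun X μ)
    (hmeas : ∀ i, Measurable (X i)) (hX : ∀ i, MemLp (X i) 2 μ) {v : ℝ} (hv : 0 < v)
    (hXv : ∑ i, ∫ ω, X i ω ^ 2 ∂μ ≤ v) (hε : 0 ≤ ε) (hXε : ∀ i, ∀ᵐ ω ∂μ, ε * X i ω ≤ 3 * v) :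
    μ.real {ω | ∑ i, ∫ ω', X i ω' ∂μ + ε ≤ ∑ i, X i ω} ≤ exp (-ε ^ 2 / (4 * v)) := by
  have : IsProbabilityMeasure μ := hindep.isProbabilityMeasure
  set s : ℝ := ε / (2 * v) with hs
  have hsX (i : ι) : ∀ᵐ ω ∂μ, s * X i ω ≤ 3 / 2 := by
    filter_upwards [hXε i] with ω hω
    rw [hs, div_mul_eq_mul_div, div_le_iff₀ (by positivity)]
    linarith
  have hint (i : ι) : Integrable (fun ω ↦ exp (s * X i ω)) μ := by
    simpa only [one_mul] using integrable_exp_mul_of_le 1 (3 / 2) zero_le_one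
      ((hmeas i).const_mul s).aemeasurable (hsX i)
  calc μ.real {ω | ∑ i, ∫ ω', X i ω' ∂μ + ε ≤ ∑ i, X i ω}
      ≤ exp (-s * (∑ i, ∫ ω, X i ω ∂μ + ε)) * mgf (∑ i, X i) μ s := by
        simpa only [Finset.sum_apply] using
          measure_ge_le_exp_mul_mgf (∑ i, ∫ ω, X i ω ∂μ + ε) (by positivity)
            (hindep.integrable_exp_mul_sum hmeas fun i _ ↦ hint i)
    _ ≤ exp (-s * (∑ i, ∫ ω, X i ω ∂μ + ε)) * exp (s * ∑ i, ∫ ω, X i ω ∂μ + s ^ 2 * v) := by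
        grw [mgf_sum_le_exp_of_iIndepFun hindep hmeas hX hsX, hXv]
    _ = exp (-ε ^ 2 / (4 * v)) := by
        rw [← exp_add, hs]
        congr 1
        field_simp
        ring

lemma measureReal_sum_ge_le_exp_of_mem_Icc (hindep : iIndepFun X μ)
    (hmeas : ∀ i, Measurable (X i)) {l u : ι → ℝ} (hX : ∀ i, ∀ᵐ ω ∂μ, X i ω ∈ Icc (l i) (u i))
    (hε : 0 ≤ ε) :
    μ.real {ω | ∑ i, ∫ ω', X i ω' ∂μ + ε ≤ ∑ i, X i ω} ≤
      exp (-2 * ε ^ 2 / ∑ i, (u i - l i) ^ 2) := by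
  have : IsProbabilityMeasure μ := hindep.isProbabilityMeasure
  have hcentred : iIndepFun (fun i ω ↦ X i ω - ∫ ω', X i ω' ∂μ) μ :=
    hindep.comp (fun i x ↦ x - ∫ ω', X i ω' ∂μ) fun i ↦ by fun_prop
  convert HasSubgaussianMGF.measure_sum_ge_le_of_iIndepFun hcentred (s := .univ)
    (fun i _ ↦ hasSubgaussianMGF_of_mem_Icc (hmeas i).aemeasurable (hX i)) hε using 2
  · congr 1 with ω
    rw [Finset.sum_sub_distrib, le_sub_iff_add_le']
  · push_cast
    simp only [div_pow, norm_eq_abs, sq_abs, ← Finset.sum_div]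
    ring

end Concentration

section TwoSample

variable {𝒳 : Type*} {a b : ℕ}

/-- The sum of the empirical mean of `f` over the first sample and that of `g` over the second. -/
noncomputable def twoSampleMean (f g : 𝒳 → ℝ) (w : (Fin a → 𝒳) × (Fin b → 𝒳)) : ℝ :=
  (∑ i, f (w.1 i)) / a + (∑ j, g (w.2 j)) / b

/-- The summands of `twoSampleMean f g`, indexed by the points of the pooled sample. -/
noncomputable def twoSampleTerm (a b : ℕ) (f g : 𝒳 → ℝ) : Fin a ⊕ Fin b → 𝒳 → ℝ :=
  Sum.elim (fun _ x ↦ f x / a) (fun _ y ↦ g y / b)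

variable [MeasurableSpace 𝒳]

lemma measurable_twoSampleTerm {f g : 𝒳 → ℝ} (hf : Measurable f) (hg : Measurable g)
    (k : Fin a ⊕ Fin b) : Measurable (twoSampleTerm a b f g k) := by
  cases k
  · exact hf.div_const _
  · exact hg.div_const _

/-- The laws of the points of the pooled sample: `p` on the first sample, `q` on the second. -/
def pooledLaw (a b : ℕ) (p q : Measure 𝒳) : Fin a ⊕ Fin b → Measure 𝒳 :=
  Sum.elim (fun _ ↦ p) (fun _ ↦ q)

variable {p q : Measure 𝒳} [IsProbabilityMeasure p] [IsProbabilityMeasure q] {f g : 𝒳 → ℝ}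

instance isProbabilityMeasure_pooledLaw (k : Fin a ⊕ Fin b) :
    IsProbabilityMeasure (pooledLaw a b p q k) := by
  cases k <;> assumption

lemma measureReal_le_twoSampleMean_eq_pi (t : ℝ) :
    ((Measure.pi fun _ : Fin a ↦ p).prod (Measure.pi fun _ : Fin b ↦ q)).real
        {w | t ≤ twoSampleMean f g w} =
      (Measure.pi (pooledLaw a b p q)).real {z | t ≤ ∑ k, twoSampleTerm a b f g k (z k)} := by
  have hpre : {z | t ≤ ∑ k, twoSampleTerm a b f g k (z k)} =
      MeasurableEquiv.sumPiEquivProdPi (fun _ : Fin a ⊕ Fin b ↦ 𝒳) ⁻¹'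
        {w | t ≤ twoSampleMean f g w} := by
    ext z
    simp [twoSampleMean, twoSampleTerm, Finset.sum_div, Fintype.sum_sum_type,
      MeasurableEquiv.sumPiEquivProdPi, Equiv.sumPiEquivProdPi]
  rw [hpre]
  exact congr_arg ENNReal.toReal
    ((measurePreserving_sumPiEquivProdPi (pooledLaw a b p q)).measure_preimage_equiv _).symm

lemma iIndepFun_twoSampleTerm (hf : Measurable f) (hg : Measurable g) :
    iIndepFun (fun k z ↦ twoSampleTerm a b f g k (z k)) (Measure.pi (pooledLaw a b p q)) :=
  iIndepFun_pi fun k ↦ (measurable_twoSampleTerm hf hg k).aemeasurable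

lemma sum_integral_comp_eval_pooledLaw {h : Fin a ⊕ Fin b → 𝒳 → ℝ} (hh : ∀ k, Measurable (h k)) :
    ∑ k, ∫ z, h k (z k) ∂Measure.pi (pooledLaw a b p q) =
      ∑ i, ∫ x, h (.inl i) x ∂p + ∑ j, ∫ x, h (.inr j) x ∂q := by
  rw [Fintype.sum_congr _ _ fun k ↦
    integral_comp_eval (μ := pooledLaw a b p q) (hh k).aestronglyMeasurable]
  exact Fintype.sum_sum_type _

lemma sum_integral_twoSampleTerm (hf : Measurable f) (hg : Measurable g) (ha : a ≠ 0)
    (hb : b ≠ 0) :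
    ∑ k, ∫ z, twoSampleTerm a b f g k (z k) ∂Measure.pi (pooledLaw a b p q) =
      ∫ x, f x ∂p + ∫ x, g x ∂q := by
  rw [sum_integral_comp_eval_pooledLaw (measurable_twoSampleTerm hf hg)]
  simp [twoSampleTerm, integral_div, ha, hb, mul_div_cancel₀]

lemma sum_integral_sq_twoSampleTerm (hf : Measurable f) (hg : Measurable g) :
    ∑ k, ∫ z, twoSampleTerm a b f g k (z k) ^ 2 ∂Measure.pi (pooledLaw a b p q) =
      (∫ x, f x ^ 2 ∂p) / a + (∫ x, g x ^ 2 ∂q) / b := by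
  rw [sum_integral_comp_eval_pooledLaw (h := fun k x ↦ twoSampleTerm a b f g k x ^ 2)
    fun k ↦ (measurable_twoSampleTerm hf hg k).pow_const 2]
  simp only [twoSampleTerm, Sum.elim_inl, Sum.elim_inr, div_pow, integral_div, Finset.sum_const,
    Finset.card_univ, Fintype.card_fin, nsmul_eq_mul]
  field_simp

variable {N ε : ℝ}

lemma measureReal_twoSampleMean_ge_le_exp_of_mem_Icc (hf : Measurable f) (hg : Measurable g)
    (hf01 : ∀ x, f x ∈ Icc 0 1) (hg01 : ∀ x, g x ∈ Icc 0 1) (hN : 0 < N) (hNa : N ≤ a)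
    (hNb : N ≤ b) (hε : 0 ≤ ε) :
    ((Measure.pi fun _ : Fin a ↦ p).prod (Measure.pi fun _ : Fin b ↦ q)).real
        {w | ∫ x, f x ∂p + ∫ x, g x ∂q + ε ≤ twoSampleMean f g w} ≤ exp (-(N * ε ^ 2)) := by
  have ha : (0 : ℝ) < a := hN.trans_le hNa
  have hb : (0 : ℝ) < b := hN.trans_le hNb
  set u : Fin a ⊕ Fin b → ℝ := Sum.elim (fun _ ↦ 1 / a) (fun _ ↦ 1 / b)
  have hmem (k : Fin a ⊕ Fin b) (x : 𝒳) : twoSampleTerm a b f g k x ∈ Icc 0 (u k) := by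
    rcases k with _ | _
    · exact ⟨div_nonneg (hf01 x).1 ha.le, div_le_div_of_nonneg_right (hf01 x).2 ha.le⟩
    · exact ⟨div_nonneg (hg01 x).1 hb.le, div_le_div_of_nonneg_right (hg01 x).2 hb.le⟩
  have hwidth : ∑ k, (u k - 0) ^ 2 = 1 / (a : ℝ) + 1 / b := by
    simp only [u, sub_zero, Fintype.sum_sum_type, Sum.elim_inl, Sum.elim_inr, Finset.sum_const,
      Finset.card_univ, Fintype.card_fin, nsmul_eq_mul]
    field_simp
  rw [measureReal_le_twoSampleMean_eq_pi,
    ← sum_integral_twoSampleTerm hf hg (Nat.cast_pos.1 ha).ne' (Nat.cast_pos.1 hb).ne']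
  calc _ ≤ exp (-2 * ε ^ 2 / ∑ k, (u k - 0) ^ 2) :=
        measureReal_sum_ge_le_exp_of_mem_Icc (iIndepFun_twoSampleTerm hf hg)
          (fun k ↦ (measurable_twoSampleTerm hf hg k).comp (measurable_pi_apply k))
          (fun k ↦ .of_forall fun z ↦ hmem k (z k)) hε
    _ = exp (-(2 * ε ^ 2 / (1 / a + 1 / b))) := by rw [hwidth, neg_mul, neg_div]
    _ ≤ exp (-(2 * ε ^ 2 / (1 / N + 1 / N))) := by gcongr
    _ = exp (-(N * ε ^ 2)) := by
        congr 2
        field_simp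
        ring

lemma measureReal_twoSampleMean_ge_le_exp_of_integral_sq_le (hf : Measurable f)
    (hg : Measurable g) (hf₂ : MemLp f 2 p) (hg₂ : MemLp g 2 q) {σ : ℝ} (hσ : 0 < σ)
    (hfσ : ∫ x, f x ^ 2 ∂p ≤ σ) (hgσ : ∫ x, g x ^ 2 ∂q ≤ σ) (hN : 0 < N) (hNa : N ≤ a)
    (hNb : N ≤ b) (hε : 0 ≤ ε) (hfε : ∀ x, ε * f x ≤ 6 * σ) (hgε : ∀ x, ε * g x ≤ 6 * σ) :
    ((Measure.pi fun _ : Fin a ↦ p).prod (Measure.pi fun _ : Fin b ↦ q)).real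
        {w | ∫ x, f x ∂p + ∫ x, g x ∂q + ε ≤ twoSampleMean f g w} ≤
      exp (-(N * ε ^ 2 / (8 * σ))) := by
  have ha : (0 : ℝ) < a := hN.trans_le hNa
  have hb : (0 : ℝ) < b := hN.trans_le hNb
  have hmemLp (k : Fin a ⊕ Fin b) : MemLp (twoSampleTerm a b f g k) 2 (pooledLaw a b p q k) := by
    rcases k with _ | _
    · exact hf₂.mul_const _
    · exact hg₂.mul_const _
  have hbdd (k : Fin a ⊕ Fin b) (x : 𝒳) :
      ε * twoSampleTerm a b f g k x ≤ 3 * (2 * σ / N) := by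
    have hscale {c y : ℝ} (hc : N ≤ c) (hy : ε * y ≤ 6 * σ) : ε * (y / c) ≤ 3 * (2 * σ / N) :=
      calc ε * (y / c) = ε * y / c := by ring
        _ ≤ 6 * σ / c := div_le_div_of_nonneg_right hy (hN.le.trans hc)
        _ ≤ 6 * σ / N := by gcongr
        _ = 3 * (2 * σ / N) := by ring
    rcases k with _ | _
    · exact hscale hNa (hfε x)
    · exact hscale hNb (hgε x)
  have hsq : (∫ x, f x ^ 2 ∂p) / a + (∫ x, g x ^ 2 ∂q) / b ≤ 2 * σ / N :=
    calc _ ≤ σ / a + σ / b := by gcongr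
      _ ≤ σ / N + σ / N := by gcongr
      _ = 2 * σ / N := by ring
  rw [measureReal_le_twoSampleMean_eq_pi,
    ← sum_integral_twoSampleTerm hf hg (Nat.cast_pos.1 ha).ne' (Nat.cast_pos.1 hb).ne']
  convert measureReal_sum_ge_le_exp_of_sum_integral_sq_le (iIndepFun_twoSampleTerm hf hg)
    (fun k ↦ (measurable_twoSampleTerm hf hg k).comp (measurable_pi_apply k))
    (fun k ↦ (hmemLp k).comp_measurePreserving (measurePreserving_eval _ k))
    (v := 2 * σ / N) (by positivity) ((sum_integral_sq_twoSampleTerm hf hg).trans_le hsq) hε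
    (fun k ↦ .of_forall fun z ↦ hbdd k (z k)) using 2
  field_simp
  ring

end TwoSample

lemma mul_sqrt_div_le_mul {V N t c : ℝ} (hV : 0 ≤ V) (hN : 0 < N) (ht : t ≤ c * √(V * N)) :
    t * √(V / N) ≤ c * V :=
  calc t * √(V / N) ≤ c * √(V * N) * √(V / N) := by gcongr
    _ = c * √(V * N * (V / N)) := by rw [mul_assoc, ← sqrt_mul (by positivity)]
    _ = c * V := by rw [show V * N * (V / N) = V ^ 2 by field_simp, sqrt_sq hV]

lemma exp_neg_le_sq_of_sqrt_log_le {N δ η : ℝ} (hN : 0 < N) (hδ : 0 < δ)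
    (hη : √(log (1 / δ) / (2 * N)) ≤ η) : exp (-(4 * N * η ^ 2)) ≤ δ ^ 2 := by
  have hlog : log (1 / δ) ≤ η ^ 2 * (2 * N) :=
    (div_le_iff₀ (by positivity)).1 (sqrt_le_iff.1 hη).2
  rw [one_div, log_inv] at hlog
  calc exp (-(4 * N * η ^ 2)) ≤ exp (2 * log δ) := exp_le_exp.2 (by linarith)
    _ = δ ^ 2 := by rw [mul_comm, exp_mul, exp_log hδ, rpow_two]

section Kernel

variable {𝒳 : Type*} {K : 𝒳 → 𝒳 → ℝ} {n1X n1Y n2X n2Y : ℕ}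

lemma asymMMD_eq_neg_twoSampleMean (dtr : (Fin n1X → 𝒳) × (Fin n1Y → 𝒳))
    (dte : (Fin n2X → 𝒳) × (Fin n2Y → 𝒳)) :
    asymMMD K n1X n1Y n2X n2Y dtr dte =
      -twoSampleMean (-ntkWitness K n1X n1Y dtr) (ntkWitness K n1X n1Y dtr) dte := by
  simp only [asymMMD, twoSampleMean, ntkWitness, Pi.neg_apply, Finset.sum_neg_distrib,
    Finset.sum_sub_distrib, ← Finset.mul_sum]
  ring

lemma abs_ntkWitness_le_two (hK : ∀ x y, |K x y| ≤ 1) (dtr : (Fin n1X → 𝒳) × (Fin n1Y → 𝒳))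
    (x : 𝒳) : |ntkWitness K n1X n1Y dtr x| ≤ 2 := by
  have hmean {m : ℕ} (w : Fin m → 𝒳) : |1 / (m : ℝ) * ∑ j, K x (w j)| ≤ 1 := by
    rw [one_div_mul_eq_div, abs_div, Nat.abs_cast]
    refine div_le_one_of_le₀ ((Finset.abs_sum_le_sum_abs _ _).trans ?_) m.cast_nonneg
    simpa using Finset.sum_le_sum fun j (_ : j ∈ Finset.univ) ↦ hK x (w j)
  calc |ntkWitness K n1X n1Y dtr x| ≤ 1 + 1 :=
        (abs_sub _ _).trans (add_le_add (hmean dtr.1) (hmean dtr.2))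
    _ = 2 := one_add_one_eq_two

lemma ntkWitness_sq_le (dtr : (Fin n1X → 𝒳) × (Fin n1Y → 𝒳)) (x : 𝒳) :
    ntkWitness K n1X n1Y dtr x ^ 2 ≤
      2 * twoSampleMean (fun z ↦ K x z ^ 2) (fun z ↦ K x z ^ 2) dtr := by
  have hmean {m : ℕ} (w : Fin m → 𝒳) :
      (1 / (m : ℝ) * ∑ j, K x (w j)) ^ 2 ≤ (∑ j, K x (w j) ^ 2) / m := by
    simpa only [one_div_mul_eq_div, Finset.card_univ, Fintype.card_fin] using
      sum_div_card_sq_le_sum_sq_div_card (s := .univ) (f := fun j ↦ K x (w j))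
  calc ntkWitness K n1X n1Y dtr x ^ 2
      ≤ 2 * ((1 / (n1X : ℝ) * ∑ j, K x (dtr.1 j)) ^ 2 +
          (1 / (n1Y : ℝ) * ∑ j, K x (dtr.2 j)) ^ 2) := by
        simpa only [ntkWitness, sub_eq_add_neg, neg_sq] using
          add_sq_le (a := 1 / (n1X : ℝ) * ∑ j, K x (dtr.1 j))
            (b := -(1 / (n1Y : ℝ) * ∑ j, K x (dtr.2 j)))
    _ ≤ 2 * twoSampleMean (fun z ↦ K x z ^ 2) (fun z ↦ K x z ^ 2) dtr := by
        rw [twoSampleMean]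
        gcongr
        · exact hmean dtr.1
        · exact hmean dtr.2

variable [MeasurableSpace 𝒳]

lemma measurable_ntkWitness (hK : Measurable (Function.uncurry K))
    (dtr : (Fin n1X → 𝒳) × (Fin n1Y → 𝒳)) : Measurable (ntkWitness K n1X n1Y dtr) := by
  unfold ntkWitness
  fun_prop

/-- The second moment `z ↦ ∫ K(x, z)² dr(x)` of the kernel section at `z`. Its average over the
training sample controls the variance of the witness function under `r`. -/
noncomputable def sectionSecondMoment (K : 𝒳 → 𝒳 → ℝ) (r : Measure 𝒳) (z : 𝒳) : ℝ :=
  ∫ x, K x z ^ 2 ∂r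

variable {p q r : Measure 𝒳}

lemma integrable_section_sq [IsFiniteMeasure r] (hK : Measurable (Function.uncurry K))
    (hK₁ : ∀ x y, |K x y| ≤ 1) (z : 𝒳) : Integrable (fun x ↦ K x z ^ 2) r :=
  (MemLp.of_bound (by fun_prop) 1 (.of_forall fun x ↦ hK₁ x z)).integrable_sq

lemma sectionSecondMoment_mem_Icc [IsProbabilityMeasure r] (hK₁ : ∀ x y, |K x y| ≤ 1)
    (z : 𝒳) : sectionSecondMoment K r z ∈ Icc 0 1 := by
  refine ⟨integral_nonneg fun x ↦ sq_nonneg _, ?_⟩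
  calc sectionSecondMoment K r z ≤ ∫ _, (1 : ℝ) ∂r :=
        integral_mono_of_nonneg (.of_forall fun x ↦ sq_nonneg _) (integrable_const 1)
          (.of_forall fun x ↦ (sq_le_one_iff_abs_le_one _).2 (hK₁ x z))
    _ = 1 := by simp

lemma measurable_sectionSecondMoment [SFinite r] (hK : Measurable (Function.uncurry K)) :
    Measurable (sectionSecondMoment K r) := by
  have hsq : StronglyMeasurable fun w : 𝒳 × 𝒳 ↦ K w.2 w.1 ^ 2 :=
    Measurable.stronglyMeasurable (by fun_prop)
  exact hsq.integral_prod_right'.measurable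

lemma integral_sectionSecondMoment [IsFiniteMeasure p] [IsFiniteMeasure r]
    (hK : Measurable (Function.uncurry K)) (hK₁ : ∀ x y, |K x y| ≤ 1) :
    ∫ z, sectionSecondMoment K r z ∂p = ∫ x, ∫ z, K x z ^ 2 ∂p ∂r :=
  integral_integral_swap
    (MemLp.of_bound (f := fun w : 𝒳 × 𝒳 ↦ K w.2 w.1)
      (Measurable.aestronglyMeasurable (by fun_prop)) 1
      (.of_forall fun w ↦ hK₁ w.2 w.1)).integrable_sq

lemma integral_ntkWitness_sq_le [IsFiniteMeasure r] (hK : Measurable (Function.uncurry K))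
    (hK₁ : ∀ x y, |K x y| ≤ 1) (dtr : (Fin n1X → 𝒳) × (Fin n1Y → 𝒳)) :
    ∫ x, ntkWitness K n1X n1Y dtr x ^ 2 ∂r ≤
      2 * twoSampleMean (sectionSecondMoment K r) (sectionSecondMoment K r) dtr := by
  have hint {m : ℕ} (w : Fin m → 𝒳) :
      Integrable (fun x ↦ (∑ j, K x (w j) ^ 2) / (m : ℝ)) r :=
    (integrable_finsetSum _ fun j _ ↦ integrable_section_sq hK hK₁ (w j)).div_const _
  have hmean {m : ℕ} (w : Fin m → 𝒳) : ∫ x, (∑ j, K x (w j) ^ 2) / (m : ℝ) ∂r =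
      (∑ j, sectionSecondMoment K r (w j)) / m := by
    rw [integral_div, integral_finsetSum _ fun j _ ↦ integrable_section_sq hK hK₁ (w j)]
    rfl
  calc ∫ x, ntkWitness K n1X n1Y dtr x ^ 2 ∂r
      ≤ ∫ x, 2 * twoSampleMean (fun z ↦ K x z ^ 2) (fun z ↦ K x z ^ 2) dtr ∂r :=
        integral_mono_of_nonneg (.of_forall fun _ ↦ sq_nonneg _)
          (((hint dtr.1).add (hint dtr.2)).const_mul 2) (.of_forall (ntkWitness_sq_le dtr))
    _ = 2 * twoSampleMean (sectionSecondMoment K r) (sectionSecondMoment K r) dtr := by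
        simp only [twoSampleMean]
        rw [integral_const_mul, integral_add (hint dtr.1) (hint dtr.2), hmean, hmean]

lemma measureReal_asymMMD_lt_le_exp [IsProbabilityMeasure p] [IsProbabilityMeasure q]
    (hK : Measurable (Function.uncurry K)) (hK₁ : ∀ x y, |K x y| ≤ 1)
    {dtr : (Fin n1X → 𝒳) × (Fin n1Y → 𝒳)} {V N lam : ℝ} (hV : 0 < V)
    (hp : ∫ x, ntkWitness K n1X n1Y dtr x ^ 2 ∂p ≤ 4 * V)
    (hq : ∫ x, ntkWitness K n1X n1Y dtr x ^ 2 ∂q ≤ 4 * V) (hN : 0 < N) (hN2X : N ≤ n2X)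
    (hN2Y : N ≤ n2Y) (hlam₀ : 0 ≤ lam) (hlam : lam ≤ 3 * √(V * N)) :
    ((Measure.pi fun _ : Fin n2X ↦ p).prod (Measure.pi fun _ : Fin n2Y ↦ q)).real
        {dte | asymMMD K n1X n1Y n2X n2Y dtr dte <
          condMeanC K n1X n1Y p q dtr - 4 * lam * √(V / N)} ≤ exp (-lam ^ 2 / 2) := by
  set g := ntkWitness K n1X n1Y dtr with hg_def
  set ε := 4 * lam * √(V / N) with hε_def
  have hg : Measurable g := measurable_ntkWitness hK dtr
  have hg₂ : ∀ x, |g x| ≤ 2 := abs_ntkWitness_le_two hK₁ dtr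
  have hgLp (r : Measure 𝒳) [IsProbabilityMeasure r] : MemLp g 2 r :=
    .of_bound hg.aestronglyMeasurable 2 (.of_forall hg₂)
  have hlamV : lam * √(V / N) ≤ 3 * V := mul_sqrt_div_le_mul hV.le hN hlam
  have hεg {y : ℝ} (hy : y ≤ 2) : ε * y ≤ 6 * (4 * V) := by
    linarith [mul_le_mul_of_nonneg_left hy (by positivity : 0 ≤ ε)]
  calc _ ≤ ((Measure.pi fun _ : Fin n2X ↦ p).prod (Measure.pi fun _ : Fin n2Y ↦ q)).real
          {dte | ∫ x, (-g) x ∂p + ∫ x, g x ∂q + ε ≤ twoSampleMean (-g) g dte} := by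
        refine measureReal_mono fun dte hdte ↦ ?_
        rw [mem_ofPred_eq, asymMMD_eq_neg_twoSampleMean, condMeanC, ← hg_def] at hdte
        simp only [mem_ofPred_eq, Pi.neg_apply, integral_neg]
        linarith
    _ ≤ exp (-(N * ε ^ 2 / (8 * (4 * V)))) :=
        measureReal_twoSampleMean_ge_le_exp_of_integral_sq_le hg.neg hg (hgLp p).neg (hgLp q)
          (by positivity) (by simpa only [Pi.neg_apply, neg_sq] using hp) hq hN hN2X hN2Y
          (by positivity) (fun x ↦ hεg ((neg_le_abs _).trans (hg₂ x)))
          fun x ↦ hεg ((le_abs_self _).trans (hg₂ x))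
    _ = exp (-lam ^ 2 / 2) := by
        rw [hε_def, mul_pow, sq_sqrt (by positivity)]
        congr 1
        field_simp
        ring

/-- The training samples on which the two sample averages of `sectionSecondMoment K r` sum to less
than `2 * V`. -/
def goodTrainingSet (K : 𝒳 → 𝒳 → ℝ) (n1X n1Y : ℕ) (r : Measure 𝒳) (V : ℝ) :
    Set ((Fin n1X → 𝒳) × (Fin n1Y → 𝒳)) :=
  {dtr | twoSampleMean (sectionSecondMoment K r) (sectionSecondMoment K r) dtr < 2 * V}

lemma measurableSet_goodTrainingSet [SFinite r] (hK : Measurable (Function.uncurry K)) {V : ℝ} :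
    MeasurableSet (goodTrainingSet K n1X n1Y r V) := by
  have hκ : Measurable (sectionSecondMoment K r) := measurable_sectionSecondMoment hK
  refine measurableSet_lt ?_ measurable_const
  unfold twoSampleMean
  fun_prop

lemma integral_ntkWitness_sq_le_of_mem_goodTrainingSet [IsFiniteMeasure r]
    (hK : Measurable (Function.uncurry K)) (hK₁ : ∀ x y, |K x y| ≤ 1) {V : ℝ}
    {dtr : (Fin n1X → 𝒳) × (Fin n1Y → 𝒳)} (hdtr : dtr ∈ goodTrainingSet K n1X n1Y r V) :
    ∫ x, ntkWitness K n1X n1Y dtr x ^ 2 ∂r ≤ 4 * V := by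
  linarith [integral_ntkWitness_sq_le (r := r) hK hK₁ dtr, mem_ofPred_eq.mp hdtr]

lemma measureReal_compl_goodTrainingSet_le_exp [IsProbabilityMeasure p]
    [IsProbabilityMeasure q] [IsProbabilityMeasure r] (hK : Measurable (Function.uncurry K))
    (hK₁ : ∀ x y, |K x y| ≤ 1) {ν V N : ℝ} (hp : ∫ x, ∫ y, K x y ^ 2 ∂p ∂r ≤ ν)
    (hq : ∫ x, ∫ y, K x y ^ 2 ∂q ∂r ≤ ν) (hνV : ν ≤ V) (hN : 0 < N) (hN1X : N ≤ n1X)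
    (hN1Y : N ≤ n1Y) :
    ((Measure.pi fun _ : Fin n1X ↦ p).prod (Measure.pi fun _ : Fin n1Y ↦ q)).real
        (goodTrainingSet K n1X n1Y r V)ᶜ ≤ exp (-(4 * N * (V - ν) ^ 2)) := by
  set κ := sectionSecondMoment K r
  have hκ : Measurable κ := measurable_sectionSecondMoment hK
  have hmean : ∫ z, κ z ∂p + ∫ z, κ z ∂q ≤ 2 * ν := by
    rw [integral_sectionSecondMoment hK hK₁, integral_sectionSecondMoment hK hK₁]
    linarith
  calc _ ≤ ((Measure.pi fun _ : Fin n1X ↦ p).prod (Measure.pi fun _ : Fin n1Y ↦ q)).real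
          {dtr | ∫ z, κ z ∂p + ∫ z, κ z ∂q + 2 * (V - ν) ≤ twoSampleMean κ κ dtr} := by
        refine measureReal_mono fun dtr hdtr ↦ ?_
        have hV : 2 * V ≤ twoSampleMean κ κ dtr := not_lt.1 hdtr
        simp only [mem_ofPred_eq]
        linarith
    _ ≤ exp (-(N * (2 * (V - ν)) ^ 2)) :=
        measureReal_twoSampleMean_ge_le_exp_of_mem_Icc hκ hκ (sectionSecondMoment_mem_Icc hK₁)
          (sectionSecondMoment_mem_Icc hK₁) hN hN1X hN1Y (by linarith)
    _ = exp (-(4 * N * (V - ν) ^ 2)) := by ring_nf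

end Kernel

theorem asym_mmd_conditional_concentration_H1_general {𝒳 : Type*} [MeasurableSpace 𝒳]
    {K : 𝒳 → 𝒳 → ℝ} (hK : Measurable (Function.uncurry K)) (hK₁ : ∀ x y, |K x y| ≤ 1)
    {p q : Measure 𝒳} [IsProbabilityMeasure p] [IsProbabilityMeasure q] {ν V : ℝ}
    (hνpp : ∫ x, ∫ y, K x y ^ 2 ∂p ∂p ≤ ν) (hνpq : ∫ x, ∫ y, K x y ^ 2 ∂q ∂p ≤ ν)
    (hνqp : ∫ x, ∫ y, K x y ^ 2 ∂p ∂q ≤ ν) (hνqq : ∫ x, ∫ y, K x y ^ 2 ∂q ∂q ≤ ν)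
    {n1X n1Y n2X n2Y : ℕ} {N : ℝ} (hN : 0 ≤ N) (hN1X : N ≤ n1X) (hN1Y : N ≤ n1Y)
    (hN2X : N ≤ n2X) (hN2Y : N ≤ n2Y) {δ : ℝ} (hδ₀ : 0 < δ) (hδ₁ : δ < 1)
    (hδ : √(log (1 / δ) / (2 * N)) ≤ V - ν) :
    ∃ E : Set ((Fin n1X → 𝒳) × (Fin n1Y → 𝒳)), MeasurableSet E ∧
      1 - ENNReal.ofReal (2 * δ ^ 2) ≤
        ((Measure.pi fun _ : Fin n1X ↦ p).prod (Measure.pi fun _ : Fin n1Y ↦ q)) E ∧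
      ∀ dtr ∈ E, ∀ lam : ℝ, 0 ≤ lam → lam ≤ 3 * √(V * N) →
        ((Measure.pi fun _ : Fin n2X ↦ p).prod (Measure.pi fun _ : Fin n2Y ↦ q))
          {dte | asymMMD K n1X n1Y n2X n2Y dtr dte <
            condMeanC K n1X n1Y p q dtr - 4 * lam * √(V / N)} ≤
          ENNReal.ofReal (exp (-lam ^ 2 / 2)) := by
  rcases hN.eq_or_lt with rfl | hN
  · refine ⟨univ, .univ, by simp, fun dtr _ lam hlam₀ hlam ↦ ?_⟩
    obtain rfl : lam = 0 := le_antisymm (by simpa using hlam) hlam₀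
    simp [prob_le_one]
  have hνV : ν < V := sub_pos.1 <| lt_of_lt_of_le
    (sqrt_pos.2 (div_pos (log_pos ((one_lt_div hδ₀).2 hδ₁)) (by positivity))) hδ
  have hV : 0 < V := lt_of_le_of_lt
    ((integral_nonneg fun x ↦ integral_nonneg fun y ↦ sq_nonneg (K x y)).trans hνpp) hνV
  have hδV := exp_neg_le_sq_of_sqrt_log_le hN hδ₀ hδ
  set E := goodTrainingSet K n1X n1Y p V ∩ goodTrainingSet K n1X n1Y q V
  have hE : MeasurableSet E :=
    (measurableSet_goodTrainingSet hK).inter (measurableSet_goodTrainingSet hK)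
  refine ⟨E, hE, ?_, fun dtr hdtr lam hlam₀ hlam ↦ ?_⟩
  · refine tsub_le_iff_right.2 ((prob_add_prob_compl hE).ge.trans (add_le_add_right ?_ _))
    rw [← ofReal_measureReal, compl_inter]
    refine ENNReal.ofReal_le_ofReal ((measureReal_union_le _ _).trans ?_)
    linarith [measureReal_compl_goodTrainingSet_le_exp hK hK₁ hνpp hνpq hνV.le hN hN1X hN1Y,
      measureReal_compl_goodTrainingSet_le_exp hK hK₁ hνqp hνqq hνV.le hN hN1X hN1Y]
  · rw [← ofReal_measureReal]
    exact ENNReal.ofReal_le_ofReal <| measureReal_asymMMD_lt_le_exp hK hK₁ hV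
      (integral_ntkWitness_sq_le_of_mem_goodTrainingSet hK hK₁ hdtr.1)
      (integral_ntkWitness_sq_le_of_mem_goodTrainingSet hK hK₁ hdtr.2) hN hN2X hN2Y hlam₀ hlam

/-- Proposition B.3, part 2: under `H₁ : p ≠ q`, for `0 < δ < 1` with
`√(log(1/δ)/(2c_a n)) ≤ 0.1ν`, there is a good event `E` of training data with
`P₍₁₎(E) ≥ 1 − 4δ` under which, for all `0 < λ < 3√(1.1νc_a n)`,
`P₍₂₎[T̂_a < Ĉ − 4λ√(1.1ν/(c_a n))] ≤ 4e^{−λ²/4}`. -/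
theorem asym_mmd_conditional_concentration_H1
    {d : ℕ} (𝒳 : Set (EuclideanSpace ℝ (Fin d))) (h𝒳 : MeasurableSet 𝒳)
    (K : 𝒳 → 𝒳 → ℝ)
    (hKmeas : Measurable (Function.uncurry K))
    (hKsym : ∀ x y, K x y = K y x)
    (hKpsd : ∀ (m : ℕ) (z : Fin m → 𝒳) (a : Fin m → ℝ),
      0 ≤ ∑ i, ∑ j, a i * a j * K (z i) (z j))
    (hKbdd : ∀ x y, |K x y| ≤ 1)
    (p q : Measure 𝒳) [IsProbabilityMeasure p] [IsProbabilityMeasure q]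
    (ν : ℝ) (hν1 : ν ≤ 1)
    (hνpp : ∫ x, ∫ y, (K x y)^2 ∂p ∂p ≤ ν)
    (hνpq : ∫ x, ∫ y, (K x y)^2 ∂q ∂p ≤ ν)
    (hνqq : ∫ x, ∫ y, (K x y)^2 ∂q ∂q ≤ ν)
    (n1X n1Y n2X n2Y : ℕ) (ca : ℝ) (hca : 0 < ca) (hca1 : ca < 1)
    (hbal1 : ca * ((n1X + n1Y + n2X + n2Y : ℕ) : ℝ) ≤ (n1X : ℝ))
    (hbal2 : ca * ((n1X + n1Y + n2X + n2Y : ℕ) : ℝ) ≤ (n1Y : ℝ))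
    (hbal3 : ca * ((n1X + n1Y + n2X + n2Y : ℕ) : ℝ) ≤ (n2X : ℝ))
    (hbal4 : ca * ((n1X + n1Y + n2X + n2Y : ℕ) : ℝ) ≤ (n2Y : ℝ))
    (hH1 : p ≠ q)
    (δ : ℝ) (hδ0 : 0 < δ) (hδ1 : δ < 1)
    (hδν : Real.sqrt (Real.log (1/δ) / (2 * ca * ((n1X + n1Y + n2X + n2Y : ℕ) : ℝ)))
      ≤ 0.1 * ν) :
    ∃ E : Set ((Fin n1X → 𝒳) × (Fin n1Y → 𝒳)), MeasurableSet E ∧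
      1 - ENNReal.ofReal (4 * δ) ≤
        ((Measure.pi fun _ : Fin n1X => p).prod (Measure.pi fun _ : Fin n1Y => q)) E ∧
      ∀ dtr ∈ E, ∀ lam : ℝ, 0 < lam →
        lam < 3 * Real.sqrt (1.1 * ν * ca * ((n1X + n1Y + n2X + n2Y : ℕ) : ℝ)) →
        ((Measure.pi fun _ : Fin n2X => p).prod (Measure.pi fun _ : Fin n2Y => q))
          {dte : (Fin n2X → 𝒳) × (Fin n2Y → 𝒳) |
            asymMMD K n1X n1Y n2X n2Y dtr dte <
              condMeanC K n1X n1Y p q dtr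
              - 4 * lam * Real.sqrt (1.1 * ν / (ca * ((n1X + n1Y + n2X + n2Y : ℕ) : ℝ)))}
          ≤ ENNReal.ofReal (4 * Real.exp (-lam^2 / 4)) := by
  have hνqp : ∫ x, ∫ y, K x y ^ 2 ∂p ∂q ≤ ν :=
    calc ∫ x, ∫ y, K x y ^ 2 ∂p ∂q = ∫ x, sectionSecondMoment K p x ∂q := by
          simp only [sectionSecondMoment, hKsym]
      _ ≤ ν := (integral_sectionSecondMoment hKmeas hKbdd).trans_le hνpq
  obtain ⟨E, hE, hPE, htail⟩ := asym_mmd_conditional_concentration_H1_general (V := 1.1 * ν)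
    hKmeas hKbdd hνpp hνpq hνqp hνqq (by positivity) hbal1 hbal2 hbal3 hbal4 hδ0 hδ1
    (by rw [← mul_assoc]; linarith)
  refine ⟨E, hE, hPE.trans' (tsub_le_tsub_left (ENNReal.ofReal_le_ofReal ?_) 1),
    fun dtr hdtr lam hlam₀ hlam ↦ (htail dtr hdtr lam hlam₀.le ?_).trans
      (ENNReal.ofReal_le_ofReal ?_)⟩
  · nlinarith
  · rw [← mul_assoc]
    exact hlam.le
  · have hexp : exp (-lam ^ 2 / 2) ≤ exp (-lam ^ 2 / 4) :=
      exp_le_exp.2 (by linarith [sq_nonneg lam])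
    linarith [exp_pos (-lam ^ 2 / 4)]
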